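/- Let A be a C*-algebra. The Lebesgue decomposition of positive functionals over A is unique if and only if for every closed *-subalgebra B of A the Lebesgue decomposition of positive functionals over B is unique. -/

import Mathlib

open scoped ComplexOrder

section CStarDefs

variable {A : Type} [NonUnitalCStarAlgebra A]

/-- A linear functional on a C⋆-algebra is positive if `0 ≤ f (a⋆ * a)` for every `a`. -/
def IsPosFnC (f : A →ₗ[ℂ] ℂ) : Prop := ∀ a : A, 0 ≤ f (star a * a)

/-- Order on positive functionals: `f ≤ g` iff `g - f` is positive. -/
def FnLEC (f g : A →ₗ[ℂ] ℂ) : Prop := IsPosFnC (g - f)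

/-- Absolute continuity `f ≪ g` for positive functionals on a C⋆-algebra: `f` is the
pointwise limit of an increasing sequence of positive functionals `fₙ` with `fₙ ≤ αₙ • g`
for some positive reals `αₙ`. -/
def AbsContC (f g : A →ₗ[ℂ] ℂ) : Prop :=
  ∃ (fn : ℕ → (A →ₗ[ℂ] ℂ)) (α : ℕ → ℝ),
    (∀ n, IsPosFnC (fn n)) ∧
    (∀ n, 0 < α n) ∧
    (∀ n, FnLEC (fn n) (fn (n + 1))) ∧
    (∀ n, FnLEC (fn n) (((α n : ℂ)) • g)) ∧
    (∀ a : A, Filter.Tendsto (fun n => fn n a) Filter.atTop (nhds (f a)))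

/-- Singularity `f ⊥ g`: the only positive functional dominated by both `f` and `g`
is `0`. -/
def SingularC (f g : A →ₗ[ℂ] ℂ) : Prop :=
  ∀ p : A →ₗ[ℂ] ℂ, IsPosFnC p → FnLEC p f → FnLEC p g → p = 0

/-- `f = fr + fs` is a Lebesgue decomposition of `f` with respect to `g`. -/
def IsLebDecompC (f g fr fs : A →ₗ[ℂ] ℂ) : Prop :=
  IsPosFnC fr ∧ IsPosFnC fs ∧ f = fr + fs ∧ AbsContC fr g ∧ SingularC fs g

/-- The Lebesgue decomposition of `f` with respect to `g` is unique. -/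
def LebDecompUniqueForC (f g : A →ₗ[ℂ] ℂ) : Prop :=
  ∀ fr fs fr' fs' : A →ₗ[ℂ] ℂ, IsLebDecompC f g fr fs → IsLebDecompC f g fr' fs' →
    fr = fr' ∧ fs = fs'

end CStarDefs

/-- The Lebesgue decomposition of positive functionals over the C⋆-algebra `A` is unique. -/
def LebDecompUniqueC (A : Type) [NonUnitalCStarAlgebra A] : Prop :=
  ∀ f g : A →ₗ[ℂ] ℂ, IsPosFnC f → IsPosFnC g → LebDecompUniqueForC f g


open Filter Topology

section Basics

variable {A : Type} [NonUnitalCStarAlgebra A]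

theorem fnext {p q : A →ₗ[ℂ] ℂ} (h : ∀ a, p (star a * a) = q (star a * a)) : p = q := by
  let _ := CStarAlgebra.spectralOrder A
  let _ := CStarAlgebra.spectralOrderedRing A
  ext x
  obtain ⟨y, hy, -, hx⟩ := CStarAlgebra.exists_sum_four_nonneg x
  rw [hx]
  simp only [map_sum, map_smul]
  refine Finset.sum_congr rfl fun i _ => ?_
  obtain ⟨b, hb⟩ := CStarAlgebra.nonneg_iff_eq_star_mul_self.1 (hy i)
  rw [hb, h]

theorem IsPosFnC.eq_re {p : A →ₗ[ℂ] ℂ} (h : IsPosFnC p) (a : A) :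
    p (star a * a) = (((p (star a * a)).re : ℝ) : ℂ) := by
  have := h a
  rw [Complex.nonneg_iff] at this
  apply Complex.ext <;> simp [← this.2]

theorem IsPosFnC.re_nonneg {p : A →ₗ[ℂ] ℂ} (h : IsPosFnC p) (a : A) :
    0 ≤ (p (star a * a)).re := by
  have := h a
  rw [Complex.nonneg_iff] at this
  exact this.1

theorem isPos_of_re {p : A →ₗ[ℂ] ℂ} (r : A → ℝ) (hr : ∀ a, 0 ≤ r a)
    (h : ∀ a, p (star a * a) = ((r a : ℝ) : ℂ)) : IsPosFnC p := by
  intro a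
  rw [h a]
  exact_mod_cast hr a

theorem fnle_iff {p q : A →ₗ[ℂ] ℂ} (hp : IsPosFnC p) (hq : IsPosFnC q) :
    FnLEC p q ↔ ∀ a, (p (star a * a)).re ≤ (q (star a * a)).re := by
  unfold FnLEC
  constructor
  · intro h a
    have := h.re_nonneg a
    simp at this
    exact this
  · intro h
    refine isPos_of_re (fun a => (q (star a * a)).re - (p (star a * a)).re)
      (fun a => sub_nonneg.2 (h a)) fun a => ?_
    rw [LinearMap.sub_apply, hp.eq_re, hq.eq_re]
    simp

theorem IsPosFnC.add {p q : A →ₗ[ℂ] ℂ} (hp : IsPosFnC p) (hq : IsPosFnC q) :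
    IsPosFnC (p + q) := fun a => add_nonneg (hp a) (hq a)

theorem IsPosFnC.smul {p : A →ₗ[ℂ] ℂ} (hp : IsPosFnC p) {r : ℝ} (hr : 0 ≤ r) :
    IsPosFnC ((r : ℂ) • p) := fun a => by
  have h1 : (0 : ℂ) ≤ (r : ℂ) := by exact_mod_cast hr
  simpa using mul_nonneg h1 (hp a)

theorem IsPosFnC.bound {p : A →ₗ[ℂ] ℂ} (hp : IsPosFnC p) :
    ∃ C : ℝ, 0 ≤ C ∧ ∀ a, ‖p a‖ ≤ C * ‖a‖ := by
  let _ := CStarAlgebra.spectralOrder A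
  let _ := CStarAlgebra.spectralOrderedRing A
  let P : A →ₚ[ℂ] ℂ := PositiveLinearMap.mk₀ p fun x hx => by
    obtain ⟨b, hb⟩ := CStarAlgebra.nonneg_iff_eq_star_mul_self.1 hx
    rw [hb]; exact hp b
  obtain ⟨C, hC⟩ := P.exists_norm_apply_le
  exact ⟨C, C.2, hC⟩

/-- A (concrete) GNS triple for `f`. -/
structure IsGNS {H : Type} [NormedAddCommGroup H] [InnerProductSpace ℂ H] [CompleteSpace H]
    (f : A →ₗ[ℂ] ℂ) (π : A →⋆ₙₐ[ℂ] (H →L[ℂ] H)) (ι : A →ₗ[ℂ] H) : Prop where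
  dense : DenseRange ι
  inner_eq : ∀ a b, inner ℂ (ι a) (ι b) = f (star a * b)
  act : ∀ a b, π a (ι b) = ι (a * b)

theorem exists_gns {f : A →ₗ[ℂ] ℂ} (hf : IsPosFnC f) :
    ∃ (H : Type) (_ : NormedAddCommGroup H) (_ : InnerProductSpace ℂ H) (_ : CompleteSpace H)
      (π : A →⋆ₙₐ[ℂ] (H →L[ℂ] H)) (ι : A →ₗ[ℂ] H), IsGNS f π ι := by
  let _ := CStarAlgebra.spectralOrder A
  let _ := CStarAlgebra.spectralOrderedRing A
  let P : A →ₚ[ℂ] ℂ := PositiveLinearMap.mk₀ f fun x hx => by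
    obtain ⟨b, hb⟩ := CStarAlgebra.nonneg_iff_eq_star_mul_self.1 hx
    rw [hb]; exact hf b
  refine ⟨P.GNS, inferInstance, inferInstance, inferInstance, P.gnsNonUnitalStarAlgHom,
    (UniformSpace.Completion.toComplL (𝕜 := ℂ) (E := P.PreGNS)).toLinearMap ∘ₗ
      P.toPreGNS.toLinearMap, ?_, ?_, ?_⟩
  · have h1 : DenseRange (fun x : P.PreGNS => (x : P.GNS)) :=
      UniformSpace.Completion.denseRange_coe
    exact h1
  · intro a b
    change inner ℂ ((P.toPreGNS a : P.PreGNS) : P.GNS) ((P.toPreGNS b : P.PreGNS) : P.GNS) = _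
    rw [UniformSpace.Completion.inner_coe, PositiveLinearMap.preGNS_inner_def]
    rfl
  · intro a b
    change P.gnsNonUnitalStarAlgHom a ((P.toPreGNS b : P.PreGNS) : P.GNS) = _
    rw [PositiveLinearMap.gnsNonUnitalStarAlgHom_apply_coe]
    rfl

theorem IsGNS.norm_sq {H : Type} [NormedAddCommGroup H] [InnerProductSpace ℂ H] [CompleteSpace H]
    {f : A →ₗ[ℂ] ℂ} {π : A →⋆ₙₐ[ℂ] (H →L[ℂ] H)} {ι : A →ₗ[ℂ] H} (h : IsGNS f π ι) (a : A) :
    ‖ι a‖ ^ 2 = (f (star a * a)).re := by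
  rw [← h.inner_eq, ← inner_self_eq_norm_sq (𝕜 := ℂ)]
  rfl

theorem rep_star {H : Type} [NormedAddCommGroup H] [InnerProductSpace ℂ H] [CompleteSpace H]
    (π : A →⋆ₙₐ[ℂ] (H →L[ℂ] H)) (a : A) (u v : H) :
    inner ℂ (π a u) v = inner ℂ u (π (star a) v) := by
  rw [map_star, ContinuousLinearMap.star_eq_adjoint, ContinuousLinearMap.adjoint_inner_right]

theorem rep_norm {H : Type} [NormedAddCommGroup H] [InnerProductSpace ℂ H] [CompleteSpace H]
    (π : A →⋆ₙₐ[ℂ] (H →L[ℂ] H)) (a : A) (u : H) :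
    ‖π a u‖ ≤ ‖a‖ * ‖u‖ :=
  (ContinuousLinearMap.le_opNorm _ _).trans
    (mul_le_mul_of_nonneg_right (NonUnitalStarAlgHom.norm_apply_le π a) (norm_nonneg _))

/-- approximate units act as identities on GNS vectors -/
theorem IsGNS.nondeg {H : Type} [NormedAddCommGroup H] [InnerProductSpace ℂ H] [CompleteSpace H]
    {f : A →ₗ[ℂ] ℂ} {π : A →⋆ₙₐ[ℂ] (H →L[ℂ] H)} {ι : A →ₗ[ℂ] H} (h : IsGNS f π ι)
    (hf : IsPosFnC f) (η : H) {ε : ℝ} (hε : 0 < ε) : ∃ e : A, ‖η - π e η‖ < ε := by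
  let _ := CStarAlgebra.spectralOrder A
  let _ := CStarAlgebra.spectralOrderedRing A
  obtain ⟨C, hC0, hC⟩ := hf.bound
  have hι : ∀ x, ‖ι x‖ ≤ Real.sqrt C * ‖x‖ := by
    intro x
    refine abs_le_of_sq_le_sq' ?_ (by positivity) |>.2
    rw [h.norm_sq, mul_pow, Real.sq_sqrt hC0]
    calc _ ≤ ‖f (star x * x)‖ := Complex.re_le_norm _
      _ ≤ C * ‖star x * x‖ := hC _
      _ = _ := by rw [CStarRing.norm_star_mul_self, sq]
  obtain ⟨b, hb⟩ := h.dense.exists_dist_lt η (ε := ε / 4) (by positivity)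
  have hu := CStarAlgebra.increasingApproximateUnit A
  have h1 : Tendsto (fun e => e * b) (CStarAlgebra.approximateUnit A) (𝓝 b) :=
    hu.tendsto_mul_right b
  have h2 : ∀ᶠ e in CStarAlgebra.approximateUnit A, Real.sqrt C * ‖b - e * b‖ < ε / 4 := by
    have : Tendsto (fun e => Real.sqrt C * ‖b - e * b‖) (CStarAlgebra.approximateUnit A)
        (𝓝 (Real.sqrt C * ‖b - b‖)) := ((tendsto_const_nhds.sub h1).norm).const_mul _
    rw [sub_self, norm_zero, mul_zero] at this
    exact this.eventually_lt_const (by positivity)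
  obtain ⟨e, he1, he2⟩ := (hu.eventually_norm.and h2).exists
  refine ⟨e, ?_⟩
  rw [dist_eq_norm] at hb
  have h3 : ‖ι b - π e (ι b)‖ < ε / 4 := by
    rw [h.act, ← map_sub]
    exact (hι _).trans_lt he2
  have h4 : ‖π e (η - ι b)‖ ≤ ‖η - ι b‖ :=
    (rep_norm π e _).trans (mul_le_of_le_one_left (norm_nonneg _) he1)
  calc ‖η - π e η‖ = ‖(η - ι b) + (ι b - π e (ι b)) - π e (η - ι b)‖ := by
        rw [map_sub]; congr 1; abel
    _ ≤ ‖η - ι b‖ + ‖ι b - π e (ι b)‖ + ‖π e (η - ι b)‖ := norm_sub_le_of_le (norm_add_le _ _) le_rfl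
    _ < ε := by linarith

/-- cyclic vector -/
theorem IsGNS.cyclic {H : Type} [NormedAddCommGroup H] [InnerProductSpace ℂ H] [CompleteSpace H]
    {f : A →ₗ[ℂ] ℂ} {π : A →⋆ₙₐ[ℂ] (H →L[ℂ] H)} {ι : A →ₗ[ℂ] H} (h : IsGNS f π ι)
    (hf : IsPosFnC f) : ∃ ξ : H, ∀ b, π b ξ = ι b := by
  let _ := CStarAlgebra.spectralOrder A
  let _ := CStarAlgebra.spectralOrderedRing A
  obtain ⟨C, hC0, hC⟩ := hf.bound
  have hfc : Continuous f := (f.mkContinuous C hC).continuous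
  have hι : ∀ x, ‖ι x‖ ≤ Real.sqrt C * ‖x‖ := by
    intro x
    refine abs_le_of_sq_le_sq' ?_ (by positivity) |>.2
    rw [h.norm_sq, mul_pow, Real.sq_sqrt hC0]
    calc _ ≤ ‖f (star x * x)‖ := Complex.re_le_norm _
      _ ≤ C * ‖star x * x‖ := hC _
      _ = _ := by rw [CStarRing.norm_star_mul_self, sq]
  have hbd : ∀ b, ‖f b‖ ≤ Real.sqrt C * ‖ι b‖ := by
    intro b
    have hu := CStarAlgebra.increasingApproximateUnit A
    have h1 : Tendsto (fun e => ‖f (e * b)‖) (CStarAlgebra.approximateUnit A) (𝓝 ‖f b‖) :=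
      ((hfc.tendsto b).comp (hu.tendsto_mul_right b)).norm
    refine le_of_tendsto h1 ?_
    filter_upwards [hu.eventually_norm, hu.eventually_star_eq] with e he he'
    have : f (e * b) = inner ℂ (ι e) (ι b) := by rw [h.inner_eq, he']
    rw [this]
    refine (norm_inner_le_norm _ _).trans ?_
    gcongr
    refine (hι e).trans ?_
    exact mul_le_of_le_one_right (Real.sqrt_nonneg _) he
  let L : H →L[ℂ] ℂ := LinearMap.extendOfNorm f ι
  have hL : ∀ b, L (ι b) = f b := LinearMap.extendOfNorm_eq h.dense ⟨_, hbd⟩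
  refine ⟨(InnerProductSpace.toDual ℂ H).symm L, fun b => ?_⟩
  refine ext_inner_right ℂ fun w => ?_
  refine h.dense.induction_on w (isClosed_eq (by fun_prop) (by fun_prop)) fun c => ?_
  rw [rep_star, InnerProductSpace.toDual_symm_apply, h.act, hL, h.inner_eq]

/-- the Radon-Nikodym type operator -/
theorem IsGNS.operator {H : Type} [NormedAddCommGroup H] [InnerProductSpace ℂ H] [CompleteSpace H]
    {f : A →ₗ[ℂ] ℂ} {π : A →⋆ₙₐ[ℂ] (H →L[ℂ] H)} {ι : A →ₗ[ℂ] H} (h : IsGNS f π ι)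
    {p : A →ₗ[ℂ] ℂ} (hp : IsPosFnC p)
    (hpf : ∀ a, (p (star a * a)).re ≤ (f (star a * a)).re) :
    ∃ T : H →L[ℂ] H, (∀ c b, inner ℂ (ι c) (T (ι b)) = p (star c * b)) ∧
      (∀ v, ‖T v‖ ^ 2 ≤ (inner ℂ v (T v)).re) ∧
      (∀ u v, inner ℂ (T u) v = inner ℂ u (T v)) ∧
      (∀ b v, T (π b v) = π b (T v)) := by
  obtain ⟨H', _, _, _, π', ι', h'⟩ := exists_gns hp
  have hb : ∀ x, ‖ι' x‖ ≤ 1 * ‖ι x‖ := by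
    intro x
    rw [one_mul]
    refine abs_le_of_sq_le_sq' ?_ (by positivity) |>.2
    rw [h.norm_sq, h'.norm_sq]
    exact hpf x
  let J : H →L[ℂ] H' := LinearMap.extendOfNorm ι' ι
  have hJ : ∀ b, J (ι b) = ι' b := LinearMap.extendOfNorm_eq h.dense ⟨_, hb⟩
  have hJn : ‖J‖ ≤ 1 := LinearMap.opNorm_extendOfNorm_le h.dense zero_le_one hb
  have hJπ : ∀ b v, J (π b v) = π' b (J v) := by
    intro b v
    refine h.dense.induction_on v (isClosed_eq (by fun_prop) (by fun_prop)) fun c => ?_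
    rw [h.act, hJ, hJ, h'.act]
  refine ⟨J.adjoint ∘L J, ?_, ?_, ?_, ?_⟩
  · intro c b
    rw [ContinuousLinearMap.comp_apply, ContinuousLinearMap.adjoint_inner_right, hJ, hJ,
      h'.inner_eq]
  · intro v
    rw [ContinuousLinearMap.comp_apply, ContinuousLinearMap.adjoint_inner_right]
    have h1 : (inner ℂ (J v) (J v)).re = ‖J v‖ ^ 2 := by
      rw [← inner_self_eq_norm_sq (𝕜 := ℂ)]; rfl
    rw [h1]
    gcongr
    refine (ContinuousLinearMap.le_opNorm _ _).trans ?_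
    refine mul_le_of_le_one_left (norm_nonneg _) ?_
    rw [LinearIsometryEquiv.norm_map]
    exact hJn
  · intro u v
    simp [ContinuousLinearMap.adjoint_inner_right, ContinuousLinearMap.adjoint_inner_left]
  · intro b v
    refine ext_inner_left ℂ fun w => ?_
    rw [← star_star b, ← rep_star]
    simp [ContinuousLinearMap.adjoint_inner_right, hJπ, rep_star]

end Basics

section StepOne

variable {A : Type} [NonUnitalCStarAlgebra A]
variable {H : Type} [NormedAddCommGroup H] [InnerProductSpace ℂ H] [CompleteSpace H]
variable {φ : A →ₗ[ℂ] ℂ} {π : A →⋆ₙₐ[ℂ] (H →L[ℂ] H)} {ι : A →ₗ[ℂ] H}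

theorem IsGNS.op_ext (h : IsGNS φ π ι) {T T' : H →L[ℂ] H}
    (hT : ∀ c b, inner ℂ (ι c) (T (ι b)) = inner ℂ (ι c) (T' (ι b))) : T = T' := by
  ext v
  refine h.dense.induction_on v (isClosed_eq (by fun_prop) (by fun_prop)) fun b => ?_
  refine ext_inner_left ℂ fun w => ?_
  exact h.dense.induction_on w (isClosed_eq (by fun_prop) (by fun_prop)) fun c => hT c b

theorem op_contr {T : H →L[ℂ] H} (hT : ∀ v, ‖T v‖ ^ 2 ≤ (inner ℂ v (T v)).re) (v : H) :
    ‖T v‖ ≤ ‖v‖ := by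
  have h1 := hT v
  have h2 : (inner ℂ v (T v)).re ≤ ‖v‖ * ‖T v‖ := re_inner_le_norm (𝕜 := ℂ) v (T v)
  by_contra! hc
  have : 0 < ‖T v‖ := (norm_nonneg _).trans_lt hc
  nlinarith

theorem AbsContC.le {r g : A →ₗ[ℂ] ℂ} {fn : ℕ → (A →ₗ[ℂ] ℂ)}
    (h1 : ∀ n, IsPosFnC (fn n)) (h3 : ∀ n, FnLEC (fn n) (fn (n + 1)))
    (h5 : ∀ a : A, Tendsto (fun n => fn n a) atTop (𝓝 (r a))) (n : ℕ) (a : A) :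
    (fn n (star a * a)).re ≤ (r (star a * a)).re := by
  have hm : Monotone fun n => (fn n (star a * a)).re :=
    monotone_nat_of_le_succ fun n => (fnle_iff (h1 n) (h1 (n + 1))).1 (h3 n) a
  have ht : Tendsto (fun n => (fn n (star a * a)).re) atTop (𝓝 (r (star a * a)).re) :=
    (Complex.continuous_re.tendsto _).comp (h5 _)
  exact hm.ge_of_tendsto ht n

theorem IsGNS.ac_kernel (h : IsGNS φ π ι) {r g : A →ₗ[ℂ] ℂ} (hg : IsPosFnC g)
    (hrφ : ∀ a, (r (star a * a)).re ≤ (φ (star a * a)).re)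
    (hac : AbsContC r g) {Tr Tg : H →L[ℂ] H}
    (hr1 : ∀ c b, inner ℂ (ι c) (Tr (ι b)) = r (star c * b))
    (hr2 : ∀ v, ‖Tr v‖ ^ 2 ≤ (inner ℂ v (Tr v)).re)
    (hg1 : ∀ c b, inner ℂ (ι c) (Tg (ι b)) = g (star c * b))
    {w : H} (hw : Tg w = 0) : Tr w = 0 := by
  obtain ⟨fn, α, h1, h2, h3, h4, h5⟩ := hac
  have hle := fun n a => AbsContC.le (g := g) h1 h3 h5 n a
  choose T hT1 hT2 hT3 hT4 using fun n => h.operator (h1 n) fun a => (hle n a).trans (hrφ a)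
  have hTw : ∀ n, T n w = 0 := by
    intro n
    have hdom : ∀ v, (inner ℂ v (T n v)).re ≤ α n * (inner ℂ v (Tg v)).re := by
      intro v
      refine h.dense.induction_on v (isClosed_le ?_ ?_) fun b => ?_
      · exact Complex.continuous_re.comp (by fun_prop)
      · exact continuous_const.mul (Complex.continuous_re.comp (by fun_prop))
      · rw [hT1, hg1]
        have := (fnle_iff (h1 n) (hg.smul (h2 n).le)).1 (h4 n) b
        simpa using this
    have h6 := (hT2 n w).trans (hdom w)
    rw [hw, inner_zero_right] at h6
    have : ‖T n w‖ ^ 2 = 0 := le_antisymm (by simpa using h6) (sq_nonneg _)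
    simpa using this
  have hbd : ∀ b, ‖Tr (ι b)‖ ^ 2 ≤ ‖ι b‖ * ‖ι b - w‖ := by
    intro b
    refine (hr2 _).trans ?_
    rw [hr1]
    have ht : Tendsto (fun n => (fn n (star b * b)).re) atTop (𝓝 (r (star b * b)).re) :=
      (Complex.continuous_re.tendsto _).comp (h5 _)
    refine le_of_tendsto' ht fun n => ?_
    rw [← hT1 n]
    have : T n (ι b) = T n (ι b - w) := by rw [map_sub, hTw, sub_zero]
    rw [this]
    refine (re_inner_le_norm (𝕜 := ℂ) _ _).trans ?_
    gcongr
    exact op_contr (hT2 n) _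
  have hbd2 : ∀ v, ‖Tr v‖ ^ 2 ≤ ‖v‖ * ‖v - w‖ := fun v =>
    h.dense.induction_on v (isClosed_le (by fun_prop) (by fun_prop)) hbd
  have := hbd2 w
  rw [sub_self, norm_zero, mul_zero] at this
  have : ‖Tr w‖ ^ 2 = 0 := le_antisymm this (sq_nonneg _)
  simpa using this

theorem birkhoff_bound (S T : H →L[ℂ] H) (hST : ∀ v, v - S v = T v) (hS : ∀ v, ‖S v‖ ≤ ‖v‖)
    (n : ℕ) (v : H) :
    ‖v - birkhoffAverage ℂ S _root_.id (n + 1) v‖ ≤ (n + 1) * ‖T v‖ := by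
  have h1 : ∀ k v, ‖v - S^[k] v‖ ≤ k * ‖T v‖ := by
    intro k
    induction k with
    | zero => intro v; simp
    | succ k ih =>
      intro v
      rw [Function.iterate_succ_apply']
      have : v - S (S^[k] v) = T v + S (v - S^[k] v) := by
        rw [← hST, map_sub]; abel
      rw [this]
      refine (norm_add_le _ _).trans ?_
      have := (hS (v - S^[k] v)).trans (ih v)
      push_cast
      linarith
  have h2 : v - birkhoffAverage ℂ S _root_.id (n + 1) v =
      ((n : ℂ) + 1)⁻¹ • ∑ k ∈ Finset.range (n + 1), (v - S^[k] v) := by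
    have hn : ((n : ℂ) + 1) ≠ 0 := by exact_mod_cast Nat.succ_ne_zero n
    rw [birkhoffAverage, birkhoffSum, Finset.sum_sub_distrib, smul_sub]
    simp only [Finset.sum_const, Finset.card_range, _root_.id]
    push_cast
    congr 1
    rw [← Nat.cast_smul_eq_nsmul ℂ, smul_smul]
    push_cast
    rw [inv_mul_cancel₀ hn, one_smul]
  rw [h2, norm_smul]
  have h3 : ‖∑ k ∈ Finset.range (n + 1), (v - S^[k] v)‖ ≤
      ∑ k ∈ Finset.range (n + 1), ((n : ℝ) + 1) * ‖T v‖ := by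
    refine norm_sum_le_of_le _ fun k hk => (h1 k v).trans ?_
    gcongr
    have : k ≤ n + 1 := (Finset.mem_range.1 hk).le
    exact_mod_cast this
  have h4 : ‖((n : ℂ) + 1)⁻¹‖ = ((n : ℝ) + 1)⁻¹ := by
    rw [norm_inv]
    congr 1
    have : ((n : ℂ) + 1) = ((n + 1 : ℕ) : ℂ) := by push_cast; rfl
    rw [this, Complex.norm_natCast]; push_cast; rfl
  rw [h4, inv_mul_le_iff₀ (by positivity)]
  refine h3.trans (le_of_eq ?_)
  simp

theorem birkhoff_comm (S : H →L[ℂ] H) (L : H →L[ℂ] H) (hc : ∀ v, S (L v) = L (S v))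
    (n : ℕ) (v : H) :
    birkhoffAverage ℂ S _root_.id n (L v) = L (birkhoffAverage ℂ S _root_.id n v) := by
  have h1 : ∀ k, S^[k] (L v) = L (S^[k] v) := by
    intro k
    induction k with
    | zero => rfl
    | succ k ih => rw [Function.iterate_succ_apply', ih, hc, Function.iterate_succ_apply']
  simp [birkhoffAverage, birkhoffSum, h1]

theorem step_one {f g : A →ₗ[ℂ] ℂ} (hf : IsPosFnC f) (hg : IsPosFnC g)
    (h : IsGNS (f + g) π ι) :
    ∃ θ : H, ∀ r s, IsLebDecompC f g r s → ∃ (ηn : ℕ → H) (η : H),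
      Tendsto ηn atTop (𝓝 η) ∧
      (∀ n, ∃ β : ℝ, 0 ≤ β ∧ ∀ b, ‖π b (ηn n)‖ ^ 2 ≤ β * (g (star b * b)).re) ∧
      (∀ b, ‖π b η‖ ^ 2 ≤ (s (star b * b)).re) ∧
      (η = 0 → ∀ b c, s (star c * b) = inner ℂ (ι c) (π b θ)) := by
  obtain ⟨ξ, hξ⟩ := h.cyclic (hf.add hg)
  obtain ⟨S, hS1, hS2, hS3, hS4⟩ := h.operator hf fun a => by
    have := hg.re_nonneg a
    simp only [LinearMap.add_apply, Complex.add_re]; linarith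
  obtain ⟨Tg, hg1, hg2, hg3, hg4⟩ := h.operator hg fun a => by
    have := hf.re_nonneg a
    simp only [LinearMap.add_apply, Complex.add_re]; linarith
  have hST : ∀ v, v - S v = Tg v := by
    intro v
    have : (1 : H →L[ℂ] H) - S = Tg := h.op_ext fun c b => by
      simp [inner_sub_right, hS1, hg1, h.inner_eq]
    rw [← this]; simp
  have hSc := op_contr hS2
  have hSn : ‖S‖ ≤ 1 := S.opNorm_le_bound zero_le_one fun v => by simpa using hSc v
  have herg := ContinuousLinearMap.tendsto_birkhoffAverage_orthogonalProjection S hSn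
  set W := S.eqLocus (1 : H →L[ℂ] H) with hW
  let P : H → H := fun v => (W.orthogonalProjectionOnto v : H)
  have hPt : ∀ v, Tendsto (fun n => birkhoffAverage ℂ S _root_.id n v) atTop (𝓝 (P v)) := herg
  have hP1 : ∀ v, S (P v) = P v := fun v => by
    have := (W.orthogonalProjectionOnto v).2
    exact this
  have hP2 : ∀ v, inner ℂ (P v) v = inner ℂ (P v) (P v) := fun v => by
    have : inner ℂ (P v) (v - P v) = 0 := by
      have := W.sub_starProjection_mem_orthogonal v
      exact this _ (W.orthogonalProjectionOnto v).2
    rw [inner_sub_right] at this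
    exact sub_eq_zero.1 this
  have hPπ : ∀ b v, P (π b v) = π b (P v) := by
    intro b v
    have h1 := hPt (π b v)
    have h2 := ((π b).continuous.tendsto _).comp (hPt v)
    refine tendsto_nhds_unique h1 (h2.congr fun n => ?_)
    exact (birkhoff_comm S (π b) (hS4 b) n v).symm
  refine ⟨P ξ, fun r s ⟨hr, hs, hfrs, hac, hsing⟩ => ?_⟩
  have hrf : ∀ a, (r (star a * a)).re ≤ ((f + g) (star a * a)).re := fun a => by
    have h1 := hg.re_nonneg a
    have h2 := hs.re_nonneg a
    simp only [hfrs, LinearMap.add_apply, Complex.add_re]; linarith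
  have hsf : ∀ a, (s (star a * a)).re ≤ ((f + g) (star a * a)).re := fun a => by
    have h1 := hg.re_nonneg a
    have h2 := hr.re_nonneg a
    simp only [hfrs, LinearMap.add_apply, Complex.add_re]; linarith
  obtain ⟨R, hR1, hR2, hR3, hR4⟩ := h.operator hr hrf
  obtain ⟨Q, hQ1, hQ2, hQ3, hQ4⟩ := h.operator hs hsf
  have hRQ : ∀ v, S v = R v + Q v := by
    intro v
    have : S = R + Q := h.op_ext fun c b => by
      simp [inner_add_right, hS1, hR1, hQ1, hfrs]
    rw [this]; simp
  have hQP : ∀ v, Q (P v) = P v := fun v => by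
    have h1 : Tg (P v) = 0 := by rw [← hST, hP1, sub_self]
    have h2 : R (P v) = 0 := h.ac_kernel hg hrf hac hR1 hR2 hg1 h1
    have h3 := hRQ (P v)
    rw [h2, zero_add, hP1] at h3
    exact h3.symm
  refine ⟨fun n => Q (ξ - birkhoffAverage ℂ S _root_.id (n + 1) ξ), Q (ξ - P ξ), ?_, ?_, ?_, ?_⟩
  · have h1 : Tendsto (fun n => birkhoffAverage ℂ S _root_.id (n + 1) ξ) atTop (𝓝 (P ξ)) :=
      (tendsto_add_atTop_iff_nat 1).2 (hPt ξ)
    exact (Q.continuous.tendsto _).comp (tendsto_const_nhds.sub h1)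
  · intro n
    refine ⟨((n : ℝ) + 1) ^ 2, by positivity, fun b => ?_⟩
    rw [← hQ4, map_sub, ← birkhoff_comm S (π b) (hS4 b), hξ]
    have h1 := (op_contr hQ2 _).trans (birkhoff_bound S Tg hST hSc n (ι b))
    have h2 := hg2 (ι b)
    rw [hg1] at h2
    calc _ ≤ (((n : ℝ) + 1) * ‖Tg (ι b)‖) ^ 2 := by gcongr
      _ = ((n : ℝ) + 1) ^ 2 * ‖Tg (ι b)‖ ^ 2 := mul_pow _ _ _
      _ ≤ _ := by gcongr
  · intro b
    rw [← hQ4, map_sub, ← hPπ, hξ]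
    refine (hQ2 _).trans ?_
    have h1 : inner ℂ (ι b - P (ι b)) (Q (ι b - P (ι b))) =
        s (star b * b) - inner ℂ (P (ι b)) (P (ι b)) := by
      rw [map_sub, inner_sub_right, inner_sub_left, inner_sub_left, hQ1, ← hQ3 (P (ι b)), hQP,
        hP2]
      have := hP2 (ι b)
      have h2 : inner ℂ (ι b) (P (ι b)) = inner ℂ (P (ι b)) (P (ι b)) := by
        rw [← inner_conj_symm, this, inner_conj_symm]
      rw [h2]; ring
    rw [h1]
    have h3 : 0 ≤ (inner ℂ (P (ι b)) (P (ι b))).re := inner_self_nonneg (𝕜 := ℂ)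
    simp only [Complex.sub_re]; linarith
  · intro h0 b c
    rw [map_sub, hQP, sub_eq_zero] at h0
    rw [← hQ1, ← h0, ← hQ4, hξ]

end StepOne

section Extension

open CStarAlgebra in
theorem posPart_norm_le {A : Type} [NonUnitalCStarAlgebra A] [PartialOrder A] [StarOrderedRing A]
    {z w : A} (hz : IsSelfAdjoint z) (hw : 0 ≤ w) (hzw : z ≤ w) : ‖z⁺‖ ≤ ‖w‖ := by
  rw [CFC.posPart_def]
  refine norm_cfcₙ_le fun x hx => ?_
  have h1 : ((z : Unitization ℂ A)) ≤ (w : Unitization ℂ A) :=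
    (Unitization.inr_le_iff z w hz (.of_nonneg hw)).2 hzw
  have hw' : IsSelfAdjoint (w : Unitization ℂ A) := (IsSelfAdjoint.of_nonneg hw).inr ℂ
  have hz' : IsSelfAdjoint (z : Unitization ℂ A) := hz.inr ℂ
  have h2 := h1.trans hw'.le_algebraMap_norm_self
  rw [Unitization.norm_inr] at h2
  have h3 := (le_algebraMap_iff_spectrum_le hz').1 h2 x (by
    rwa [← Unitization.quasispectrum_eq_spectrum_inr' ℝ ℂ])
  have h4 : 0 ≤ x⁺ := posPart_nonneg x
  rw [Real.norm_of_nonneg h4]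
  exact sup_le h3 (norm_nonneg _)

theorem IsPosFnC.re_star {A : Type} [NonUnitalCStarAlgebra A] {p : A →ₗ[ℂ] ℂ} (hp : IsPosFnC p)
    (a : A) : (p (star a)).re = (p a).re := by
  let q : A →ₗ[ℂ] ℂ :=
    { toFun := fun a => star (p (star a))
      map_add' := fun x y => by simp
      map_smul' := fun c x => by simp }
  have hq : q = p := fnext fun a => by
    change star (p (star (star a * a))) = _
    rw [star_mul, star_star, hp.eq_re]
    exact Complex.conj_ofReal _
  have h1 : (q (star a)).re = (p (star a)).re := by rw [hq]
  rw [← h1]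
  change (star (p (star (star a)))).re = _
  rw [star_star]
  exact Complex.conj_re _

theorem exists_pos_extension {A B : Type} [NonUnitalCStarAlgebra A] [NonUnitalCStarAlgebra B]
    (j : B →⋆ₙₐ[ℂ] A) (hj : Function.Injective j) {f : B →ₗ[ℂ] ℂ} (hf : IsPosFnC f) :
    ∃ F : A →ₗ[ℂ] ℂ, IsPosFnC F ∧ ∀ b, F (j b) = f b := by
  let _ := CStarAlgebra.spectralOrder A
  let _ := CStarAlgebra.spectralOrderedRing A
  let _ := CStarAlgebra.spectralOrder B
  let _ := CStarAlgebra.spectralOrderedRing B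
  obtain ⟨C, hC0, hC⟩ := hf.bound
  have hjn : ∀ b, ‖j b‖ = ‖b‖ := fun b => NonUnitalStarAlgHom.norm_map j hj b
  have hjc : Continuous j := (AddMonoidHomClass.isometry_of_norm j hjn).continuous
  let jl : B →ₗ[ℝ] A :=
    { toFun := j, map_add' := map_add j, map_smul' := fun c x => by
        simp only [RingHom.id_apply]
        rw [← Complex.coe_smul c x, map_smul, Complex.coe_smul] }
  have hjl : Function.Injective jl := hj
  let fR : B →ₗ[ℝ] ℝ := Complex.reLm ∘ₗ f.restrictScalars ℝ
  let N : A → ℝ := fun x => C / 2 * ‖(x + star x)⁺‖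
  have hsa : ∀ x : A, IsSelfAdjoint (x + star x) := IsSelfAdjoint.add_star_self
  let e := LinearEquiv.ofInjective jl hjl
  obtain ⟨G, hG1, hG2⟩ := exists_extension_of_le_sublinear
    (E := A) ⟨LinearMap.range jl, fR ∘ₗ e.symm.toLinearMap⟩ N (by
      intro c hc x
      simp only [N]
      have : c • x + star (c • x) = c • (x + star x) := by
        rw [star_smul, smul_add]; simp
      rw [this, CFC.posPart_smul_of_nonneg hc.le, norm_smul, Real.norm_of_nonneg hc.le]
      ring) (by
      intro x y
      simp only [N]
      rw [← mul_add]
      refine mul_le_mul_of_nonneg_left ?_ (by positivity)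
      refine le_trans ?_ (norm_add_le _ _)
      refine posPart_norm_le (hsa _) (add_nonneg (CFC.posPart_nonneg _) (CFC.posPart_nonneg _)) ?_
      have h1 : x + y + star (x + y) = (x + star x) + (y + star y) := by
        rw [star_add]; abel
      rw [h1]
      exact add_le_add (CFC.le_posPart (hsa x)) (CFC.le_posPart (hsa y))) (by
      intro x
      obtain ⟨b, rfl⟩ := e.surjective x
      change (f (e.symm (e b))).re ≤ C / 2 * ‖(j b + star (j b))⁺‖
      rw [e.symm_apply_apply, ← map_star, ← map_add]
      have hb : IsSelfAdjoint (b + star b) := IsSelfAdjoint.add_star_self b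
      have h1 : j ((b + star b)⁺) = (j (b + star b))⁺ := by
        rw [CFC.posPart_def, CFC.posPart_def]
        exact NonUnitalStarAlgHom.map_cfcₙ (R := ℝ) (S := ℂ) j _ _ (hf := by fun_prop)
          (hf₀ := by simp) (hφ := hjc) (ha := hb) (hφa := hb.map j)
      rw [← h1, hjn]
      have h2 : (f b).re = (f (b + star b)).re / 2 := by
        rw [map_add, Complex.add_re, hf.re_star]; ring
      have h3 : (f (b + star b)).re ≤ (f ((b + star b)⁺)).re := by
        have h4 := sub_nonneg.2 (CFC.le_posPart hb)
        obtain ⟨d, hd⟩ := CStarAlgebra.nonneg_iff_eq_star_mul_self.1 h4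
        have h5 := hf.re_nonneg d
        rw [← hd, map_sub, Complex.sub_re] at h5
        linarith
      have h6 := (Complex.re_le_norm _).trans (hC ((b + star b)⁺))
      rw [h2]; linarith)
  have hGj : ∀ b, G (j b) = (f b).re := by
    intro b
    have := hG1 (e b)
    change G (j b) = fR (e.symm (e b)) at this
    rw [e.symm_apply_apply] at this
    exact this
  have hskew : ∀ x : A, star x = -x → G x = 0 := by
    intro x hx
    have h1 := hG2 x
    have h2 := hG2 (-x)
    simp only [N, star_neg, hx] at h1 h2
    simp at h1 h2
    linarith
  refine ⟨Module.Dual.extendRCLike (𝕜 := ℂ) G, ?_, ?_⟩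
  · refine isPos_of_re (fun a => G (star a * a)) ?_ ?_
    · intro a
      have h1 := hG2 (-(star a * a))
      have h2 : (-(star a * a) + star (-(star a * a)))⁺ = 0 := by
        rw [CFC.posPart_eq_zero_iff _ (hsa _)]
        have h0 := star_mul_self_nonneg a
        have : -(star a * a) + star (-(star a * a)) = -(star a * a + star a * a) := by
          rw [star_neg, star_mul, star_star]; abel
        rw [this]
        exact neg_nonpos.2 (add_nonneg h0 h0)
      simp only [N, h2, norm_zero, mul_zero, map_neg] at h1
      linarith
    · intro a
      rw [Module.Dual.extendRCLike_apply]
      have : G ((RCLike.I : ℂ) • (star a * a)) = 0 := hskew _ (by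
        rw [star_smul, star_mul, star_star]; simp)
      rw [this]; simp
  · intro b
    rw [Module.Dual.extendRCLike_apply, ← map_smul, hGj, hGj]
    apply Complex.ext <;> simp

end Extension

section StepTwo

variable {A : Type} [NonUnitalCStarAlgebra A]
variable {H : Type} [NormedAddCommGroup H] [InnerProductSpace ℂ H] [CompleteSpace H]

theorem absCont_intro {f g : A →ₗ[ℂ] ℂ} (hg : IsPosFnC g) (fn : ℕ → (A →ₗ[ℂ] ℂ)) (α : ℕ → ℝ)
    (h1 : ∀ n, IsPosFnC (fn n)) (h2 : ∀ n, 0 ≤ α n)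
    (h3 : ∀ n a, (fn n (star a * a)).re ≤ (fn (n + 1) (star a * a)).re)
    (h4 : ∀ n a, (fn n (star a * a)).re ≤ α n * (g (star a * a)).re)
    (h5 : ∀ a, Tendsto (fun n => fn n a) atTop (𝓝 (f a))) : AbsContC f g := by
  refine ⟨fn, fun n => α n + 1, h1, fun n => by linarith [h2 n],
    fun n => (fnle_iff (h1 n) (h1 (n + 1))).2 (h3 n),
    fun n => (fnle_iff (h1 n) (hg.smul (by linarith [h2 n]))).2 fun a => ?_, h5⟩
  have h6 := h4 n a
  have h7 := hg.re_nonneg a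
  rw [LinearMap.smul_apply, smul_eq_mul, Complex.re_ofReal_mul]
  linarith

/-- vector functional -/
noncomputable def vecFn (π : A →⋆ₙₐ[ℂ] (H →L[ℂ] H)) (v : H) : A →ₗ[ℂ] ℂ where
  toFun a := inner ℂ v (π a v)
  map_add' x y := by simp [inner_add_right]
  map_smul' c x := by simp [inner_smul_right]

theorem vecFn_sq (π : A →⋆ₙₐ[ℂ] (H →L[ℂ] H)) (v : H) (a : A) :
    vecFn π v (star a * a) = ((‖π a v‖ ^ 2 : ℝ) : ℂ) := by
  change inner ℂ v (π (star a * a) v) = _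
  rw [map_mul, mul_apply_eq_comp, ← rep_star, inner_self_eq_norm_sq_to_K]
  simp

theorem vecFn_re (π : A →⋆ₙₐ[ℂ] (H →L[ℂ] H)) (v : H) (a : A) :
    (vecFn π v (star a * a)).re = ‖π a v‖ ^ 2 := by
  rw [vecFn_sq, Complex.ofReal_re]

theorem vecFn_pos (π : A →⋆ₙₐ[ℂ] (H →L[ℂ] H)) (v : H) : IsPosFnC (vecFn π v) :=
  isPos_of_re _ (fun _ => sq_nonneg _) (vecFn_sq π v)

theorem isPos_sum {p : ℕ → (A →ₗ[ℂ] ℂ)} (hp : ∀ k, IsPosFnC (p k)) (n : ℕ) :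
    IsPosFnC (∑ k ∈ Finset.range n, p k) := fun a => by
  rw [LinearMap.sum_apply]
  exact Finset.sum_nonneg fun k _ => hp k a

theorem exists_sumFn (π : A →⋆ₙₐ[ℂ] (H →L[ℂ] H)) (w : ℕ → ℝ) (ζ : ℕ → H) (hw : ∀ k, 0 ≤ w k)
    (hs : Summable fun k => w k * ‖ζ k‖ ^ 2) :
    ∃ X : A →ₗ[ℂ] ℂ, IsPosFnC X ∧ (∀ a, HasSum (fun k => ((w k : ℂ) • vecFn π (ζ k)) a) (X a)) ∧
      (∀ a, HasSum (fun k => w k * ‖π a (ζ k)‖ ^ 2) (X (star a * a)).re) := by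
  have h1 : ∀ a, Summable fun k => ((w k : ℂ) • vecFn π (ζ k)) a := by
    intro a
    refine Summable.of_norm_bounded (hs.mul_left ‖a‖) fun k => ?_
    rw [LinearMap.smul_apply, smul_eq_mul, norm_mul, Complex.norm_real, Real.norm_of_nonneg (hw k)]
    have h2 : ‖vecFn π (ζ k) a‖ ≤ ‖ζ k‖ * (‖a‖ * ‖ζ k‖) :=
      (norm_inner_le_norm _ _).trans
        (mul_le_mul_of_nonneg_left (rep_norm π a (ζ k)) (norm_nonneg _))
    have := mul_le_mul_of_nonneg_left h2 (hw k)
    linarith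
  let X : A →ₗ[ℂ] ℂ :=
    { toFun := fun a => ∑' k, ((w k : ℂ) • vecFn π (ζ k)) a
      map_add' := fun x y => by
        rw [← (h1 x).tsum_add (h1 y)]
        exact tsum_congr fun k => map_add _ _ _
      map_smul' := fun c x => by
        rw [RingHom.id_apply, smul_eq_mul, ← tsum_mul_left]
        exact tsum_congr fun k => map_smul _ _ _ }
  have h2 : ∀ a, HasSum (fun k => ((w k : ℂ) • vecFn π (ζ k)) a) (X a) := fun a => (h1 a).hasSum
  refine ⟨X, fun a => ?_, h2, fun a => ?_⟩
  · exact (h2 (star a * a)).nonneg fun k => (vecFn_pos π (ζ k)).smul (hw k) a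
  · have h3 := Complex.hasSum_re (h2 (star a * a))
    have h4 : (fun k => (((w k : ℂ) • vecFn π (ζ k)) (star a * a)).re) =
        fun k => w k * ‖π a (ζ k)‖ ^ 2 := by
      funext k
      rw [LinearMap.smul_apply, smul_eq_mul, Complex.re_ofReal_mul, vecFn_re]
    rw [h4] at h3
    exact h3

theorem step_two_singular {B : Type} [NonUnitalCStarAlgebra B] (j : B →⋆ₙₐ[ℂ] A)
    (π : A →⋆ₙₐ[ℂ] (H →L[ℂ] H)) {η : H} {g s : B →ₗ[ℂ] ℂ} (hg : IsPosFnC g) (hs : IsPosFnC s)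
    (hηs : ∀ b, ‖π (j b) η‖ ^ 2 ≤ (s (star b * b)).re)
    (hsing : SingularC s g)
    (hnd : ∀ ε : ℝ, 0 < ε → ∃ e : B, ‖η - π (j e) η‖ < ε)
    {G : A →ₗ[ℂ] ℂ} (hG : IsPosFnC G)
    (hGg : ∀ b, (G (star (j b) * j b)).re ≤ 2 * (g (star b * b)).re) :
    SingularC (vecFn π η) G := by
  intro p hp h1 h2
  rw [fnle_iff hp (vecFn_pos π η)] at h1
  rw [fnle_iff hp hG] at h2
  let jl : B →ₗ[ℂ] A := { toFun := j, map_add' := map_add j, map_smul' := map_smul j }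
  let q : B →ₗ[ℂ] ℂ := p ∘ₗ jl
  have hqv : ∀ b, q (star b * b) = p (star (j b) * j b) := fun b => by
    change p (j (star b * b)) = _
    rw [map_mul, map_star]
  have hq : IsPosFnC q := fun b => by rw [hqv]; exact hp _
  have hq2 : IsPosFnC (((1 / 2 : ℝ) : ℂ) • q) := hq.smul (by norm_num)
  have hqre : ∀ b, ((((1 / 2 : ℝ) : ℂ) • q) (star b * b)).re =
      1 / 2 * (p (star (j b) * j b)).re := fun b => by
    rw [LinearMap.smul_apply, smul_eq_mul, Complex.re_ofReal_mul, hqv]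
  have hq0 : ((1 / 2 : ℝ) : ℂ) • q = 0 := by
    refine hsing _ hq2 ((fnle_iff hq2 hs).2 fun b => ?_) ((fnle_iff hq2 hg).2 fun b => ?_)
    · rw [hqre]
      have h3 := h1 (j b)
      rw [vecFn_re] at h3
      have h4 := hηs b
      have h5 := hp.re_nonneg (j b)
      linarith
    · rw [hqre]
      have h3 := h2 (j b)
      have h4 := hGg b
      linarith
  have hq0' : ∀ b, (p (star (j b) * j b)).re = 0 := fun b => by
    have := hqre b
    rw [hq0] at this
    simp at this
    exact this
  obtain ⟨K, _, _, _, ρ, κ, hK⟩ := exists_gns hp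
  have hκ : ∀ e : B, κ (j e) = 0 := fun e => by
    have := hK.norm_sq (j e)
    rw [hq0'] at this
    simpa using this
  have hκa : ∀ a, κ a = 0 := by
    intro a
    have hb : ∀ ε : ℝ, 0 < ε → ‖κ a‖ ≤ ‖a‖ * ε := by
      intro ε hε
      obtain ⟨e, he⟩ := hnd ε hε
      have h3 : κ a = κ (a - a * j e) := by
        rw [map_sub, ← hK.act, hκ, map_zero, sub_zero]
      have h4 : ‖κ (a - a * j e)‖ ^ 2 ≤ ‖π (a - a * j e) η‖ ^ 2 := by
        rw [hK.norm_sq, ← vecFn_re]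
        exact h1 _
      have h5 : ‖κ (a - a * j e)‖ ≤ ‖π (a - a * j e) η‖ :=
        (abs_le_of_sq_le_sq' h4 (norm_nonneg _)).2
      have h6 : π (a - a * j e) η = π a (η - π (j e) η) := by
        rw [map_sub, map_mul, map_sub]; rfl
      rw [h3]
      refine h5.trans ?_
      rw [h6]
      refine (rep_norm π a _).trans ?_
      gcongr
    have h7 : Tendsto (fun ε : ℝ => ‖a‖ * ε) (𝓝[>] 0) (𝓝 0) := by
      have : Tendsto (fun ε : ℝ => ‖a‖ * ε) (𝓝 0) (𝓝 (‖a‖ * 0)) :=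
        (continuous_const.mul continuous_id).tendsto 0
      rw [mul_zero] at this
      exact this.mono_left nhdsWithin_le_nhds
    have h8 : ‖κ a‖ ≤ 0 := ge_of_tendsto h7 (by
      filter_upwards [self_mem_nhdsWithin] with ε hε using hb ε hε)
    simpa using h8
  refine fnext fun a => ?_
  rw [← hK.inner_eq, hκa]
  simp

theorem y_mono (U Z n2 t : ℝ) (ht : 0 < t) (ht1 : t ≤ 1) (hU : 0 ≤ U) (hZ : 0 ≤ Z)
    (h : (U - Z) ^ 2 ≤ n2) :
    (1 - t) * U ^ 2 ≤ (1 - t / 2) * n2 + 2 / t * Z ^ 2 := by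
  have h1 : (1 - t / 2) * (U - Z) ^ 2 ≤ (1 - t / 2) * n2 :=
    mul_le_mul_of_nonneg_left h (by linarith)
  have h2 : 0 ≤ t / 2 * (U - 2 / t * Z) ^ 2 := by positivity
  have h3 : t / 2 * (U - 2 / t * Z) ^ 2 = t / 2 * U ^ 2 - 2 * (U * Z) + 2 / t * Z ^ 2 := by
    field_simp; ring
  have h4 : 0 ≤ U * Z := mul_nonneg hU hZ
  nlinarith [mul_nonneg ht.le h4, sq_nonneg Z]

theorem step_two {B : Type} [NonUnitalCStarAlgebra B] (j : B →⋆ₙₐ[ℂ] A)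
    (π : A →⋆ₙₐ[ℂ] (H →L[ℂ] H)) {ηn : ℕ → H} {η : H} (hlim : Tendsto ηn atTop (𝓝 η))
    {g s : B →ₗ[ℂ] ℂ} (hg : IsPosFnC g) (hs : IsPosFnC s)
    (hβ : ∀ n, ∃ β : ℝ, 0 ≤ β ∧ ∀ b, ‖π (j b) (ηn n)‖ ^ 2 ≤ β * (g (star b * b)).re)
    (hηs : ∀ b, ‖π (j b) η‖ ^ 2 ≤ (s (star b * b)).re)
    (hsing : SingularC s g)
    (hnd : ∀ ε : ℝ, 0 < ε → ∃ e : B, ‖η - π (j e) η‖ < ε)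
    (hU : LebDecompUniqueC A) : η = 0 := by
  -- subsequence
  have hsub : ∀ n : ℕ, ∃ k, ‖ηn k - η‖ < (1 / 2 : ℝ) ^ (n + 1) := by
    intro n
    have h1 : Tendsto (fun k => ‖ηn k - η‖) atTop (𝓝 0) := tendsto_iff_norm_sub_tendsto_zero.1 hlim
    exact (h1.eventually_lt_const (by positivity)).exists
  choose k hk using hsub
  let u : ℕ → H := fun n => Nat.casesOn n 0 fun m => ηn (k m)
  have hu0 : u 0 = 0 := rfl
  have hus : ∀ m, u (m + 1) = ηn (k m) := fun m => rfl
  set M : ℝ := 1 + ‖η‖ with hM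
  have hM1 : 1 ≤ M := by have := norm_nonneg η; linarith
  have huη : ∀ n, ‖u n - η‖ ≤ M * (1 / 2 : ℝ) ^ n := by
    intro n
    cases n with
    | zero => rw [hu0]; simp [hM]
    | succ m =>
      rw [hus]
      refine (hk m).le.trans (le_mul_of_one_le_left (by positivity) hM1)
  have huγ : ∀ n, ∃ β : ℝ, 0 ≤ β ∧ ∀ b, ‖π (j b) (u n)‖ ^ 2 ≤ β * (g (star b * b)).re := by
    intro n
    cases n with
    | zero => exact ⟨0, le_rfl, fun b => by rw [hu0]; simp⟩
    | succ m => rw [hus]; exact hβ _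
  choose γ hγ0 hγ using huγ
  let ζ : ℕ → H := fun n => u (n + 1) - u n
  have hζu : ∀ n, u (n + 1) = u n + ζ n := fun n => by simp [ζ]
  have hζn : ∀ n, ‖ζ n‖ ≤ 2 * M * (1 / 2 : ℝ) ^ n := by
    intro n
    have h1 := huη n
    have h2 := huη (n + 1)
    have h3 : ζ n = (u (n + 1) - η) - (u n - η) := by simp [ζ]
    rw [h3]
    refine (norm_sub_le _ _).trans ?_
    have h4 : M * (1 / 2 : ℝ) ^ (n + 1) ≤ M * (1 / 2 : ℝ) ^ n := by
      rw [pow_succ]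
      have : 0 ≤ M * (1 / 2 : ℝ) ^ n := by positivity
      linarith
    linarith
  let δ : ℕ → ℝ := fun n => 2 * (γ n + γ (n + 1))
  have hδ0 : ∀ n, 0 ≤ δ n := fun n => by
    have := hγ0 n; have := hγ0 (n + 1); simp only [δ]; linarith
  have hζδ : ∀ n b, ‖π (j b) (ζ n)‖ ^ 2 ≤ δ n * (g (star b * b)).re := by
    intro n b
    have h1 := hγ n b
    have h2 := hγ (n + 1) b
    have h3 : ‖π (j b) (ζ n)‖ ≤ ‖π (j b) (u (n + 1))‖ + ‖π (j b) (u n)‖ := by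
      simp only [ζ, map_sub]; exact norm_sub_le _ _
    have h4 : ‖π (j b) (ζ n)‖ ^ 2 ≤ (‖π (j b) (u (n + 1))‖ + ‖π (j b) (u n)‖) ^ 2 := by
      gcongr
    simp only [δ]
    nlinarith [sq_nonneg (‖π (j b) (u (n + 1))‖ - ‖π (j b) (u n)‖)]
  let x : ℕ → ℝ := fun n => 2 * 2 ^ n
  let σ : ℕ → ℝ := fun n => (1 / 2) ^ n / (1 + δ n)
  have hx0 : ∀ n, 0 ≤ x n := fun n => by positivity
  have hσ0 : ∀ n, 0 < σ n := fun n => by have := hδ0 n; positivity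
  have hσ1 : ∀ n, σ n ≤ 1 := fun n => by
    have := hδ0 n
    refine div_le_one_of_le₀ ?_ (by positivity)
    have : (1 / 2 : ℝ) ^ n ≤ 1 := pow_le_one₀ (by norm_num) (by norm_num)
    linarith
  have hζn2 : ∀ n, ‖ζ n‖ ^ 2 ≤ 4 * M ^ 2 * ((1 / 2 : ℝ) ^ n * (1 / 2 : ℝ) ^ n) := fun n => by
    calc ‖ζ n‖ ^ 2 ≤ (2 * M * (1 / 2 : ℝ) ^ n) ^ 2 := by gcongr; exact hζn n
      _ = _ := by ring
  have hgeo : Summable fun n : ℕ => (1 / 2 : ℝ) ^ n := summable_geometric_two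
  have hxs : Summable fun n => x n * ‖ζ n‖ ^ 2 := by
    refine Summable.of_nonneg_of_le (fun n => by have := hx0 n; positivity) (fun n => ?_)
      (hgeo.mul_left (8 * M ^ 2))
    have h1 := mul_le_mul_of_nonneg_left (hζn2 n) (hx0 n)
    refine h1.trans (le_of_eq ?_)
    have h2 : (2 : ℝ) ^ n * (1 / 2 : ℝ) ^ n = 1 := by rw [← mul_pow]; norm_num
    simp only [x]
    calc _ = 8 * M ^ 2 * (((2 : ℝ) ^ n * (1 / 2 : ℝ) ^ n) * (1 / 2 : ℝ) ^ n) := by ring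
      _ = _ := by rw [h2, one_mul]
  have hσs : Summable fun n => σ n * ‖ζ n‖ ^ 2 := by
    refine Summable.of_nonneg_of_le (fun n => by have := hσ0 n; positivity) (fun n => ?_) hxs
    gcongr
    refine (hσ1 n).trans ?_
    have : (1 : ℝ) ≤ 2 ^ n := one_le_pow₀ (by norm_num)
    simp only [x]; linarith
  obtain ⟨X, hX, hX1, hX2⟩ := exists_sumFn π x ζ hx0 hxs
  obtain ⟨G, hG, hG1, hG2⟩ := exists_sumFn π σ ζ (fun n => (hσ0 n).le) hσs
  have hGg : ∀ b, (G (star (j b) * j b)).re ≤ 2 * (g (star b * b)).re := by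
    intro b
    refine hasSum_le (fun n => ?_) (hG2 (j b)) (hasSum_geometric_two.mul_right (g (star b * b)).re)
    have h1 := hδ0 n
    have h2 := hg.re_nonneg b
    have h3 := hζδ n b
    have h4 : ‖π (j b) (ζ n)‖ ^ 2 ≤ (1 + δ n) * (g (star b * b)).re := by linarith
    simp only [σ]
    calc _ ≤ (1 / 2 : ℝ) ^ n / (1 + δ n) * ((1 + δ n) * (g (star b * b)).re) := by gcongr
      _ = _ := by field_simp
  have hζG : ∀ n a, ‖π a (ζ n)‖ ^ 2 ≤ (σ n)⁻¹ * (G (star a * a)).re := by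
    intro n a
    have h1 : σ n * ‖π a (ζ n)‖ ^ 2 ≤ (G (star a * a)).re :=
      le_hasSum (hG2 a) n fun m _ => mul_nonneg (hσ0 m).le (sq_nonneg _)
    rw [inv_mul_eq_div, le_div_iff₀ (hσ0 n)]
    linarith
  have huG : ∀ n, ∃ c : ℝ, 0 ≤ c ∧ ∀ a, ‖π a (u n)‖ ^ 2 ≤ c * (G (star a * a)).re := by
    intro n
    induction n with
    | zero => exact ⟨0, le_rfl, fun a => by rw [hu0]; simp⟩
    | succ n ih =>
      obtain ⟨c, hc0, hc⟩ := ih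
      refine ⟨2 * c + 2 * (σ n)⁻¹, by have := hσ0 n; positivity, fun a => ?_⟩
      have h1 := hc a
      have h2 := hζG n a
      have h3 : ‖π a (u (n + 1))‖ ≤ ‖π a (u n)‖ + ‖π a (ζ n)‖ := by
        rw [hζu, map_add]; exact norm_add_le _ _
      have h4 : ‖π a (u (n + 1))‖ ^ 2 ≤ (‖π a (u n)‖ + ‖π a (ζ n)‖) ^ 2 := by gcongr
      nlinarith [sq_nonneg (‖π a (u n)‖ - ‖π a (ζ n)‖)]
  choose c hc0 hc using huG
  -- partial sums
  let Xn : ℕ → (A →ₗ[ℂ] ℂ) := fun n => ∑ i ∈ Finset.range n, ((x i : ℂ) • vecFn π (ζ i))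
  have hXnp : ∀ n, IsPosFnC (Xn n) := isPos_sum fun i => (vecFn_pos π (ζ i)).smul (hx0 i)
  have hterm : ∀ i a, (((x i : ℂ) • vecFn π (ζ i)) (star a * a)).re = x i * ‖π a (ζ i)‖ ^ 2 := by
    intro i a
    rw [LinearMap.smul_apply, smul_eq_mul, Complex.re_ofReal_mul, vecFn_re]
  have hXns : ∀ n a, (Xn (n + 1) (star a * a)).re =
      (Xn n (star a * a)).re + x n * ‖π a (ζ n)‖ ^ 2 := by
    intro n a
    simp only [Xn, Finset.sum_range_succ]
    rw [LinearMap.add_apply, Complex.add_re, hterm]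
  have hXnG : ∀ n a, (Xn n (star a * a)).re ≤
      (∑ i ∈ Finset.range n, x i * (σ i)⁻¹) * (G (star a * a)).re := by
    intro n a
    induction n with
    | zero => simp [Xn]
    | succ n ih =>
      rw [hXns, Finset.sum_range_succ]
      have := mul_le_mul_of_nonneg_left (hζG n a) (hx0 n)
      linarith
  have hXnt : ∀ a, Tendsto (fun n => Xn n a) atTop (𝓝 (X a)) := by
    intro a
    refine (hX1 a).tendsto_sum_nat.congr fun n => ?_
    simp [Xn]
  have hac1 : AbsContC X G := by
    refine absCont_intro hG Xn (fun n => ∑ i ∈ Finset.range n, x i * (σ i)⁻¹) hXnp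
      (fun n => Finset.sum_nonneg fun i _ => mul_nonneg (hx0 i) (inv_nonneg.2 (hσ0 i).le))
      (fun n a => ?_) hXnG hXnt
    rw [hXns]
    have := mul_nonneg (hx0 n) (sq_nonneg ‖π a (ζ n)‖)
    linarith
  have htn : ∀ n : ℕ, 0 < (1 / 2 : ℝ) ^ n ∧ (1 / 2 : ℝ) ^ n ≤ 1 := fun n =>
    ⟨by positivity, pow_le_one₀ (by norm_num) (by norm_num)⟩
  let Y : ℕ → (A →ₗ[ℂ] ℂ) := fun n =>
    ((1 - (1 / 2 : ℝ) ^ n : ℝ) : ℂ) • vecFn π (u n) + Xn n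
  have hY1 : ∀ n, IsPosFnC (((1 - (1 / 2 : ℝ) ^ n : ℝ) : ℂ) • vecFn π (u n)) := fun n =>
    (vecFn_pos π (u n)).smul (by linarith [(htn n).2])
  have hYp : ∀ n, IsPosFnC (Y n) := fun n => (hY1 n).add (hXnp n)
  have hYre : ∀ n a, (Y n (star a * a)).re =
      (1 - (1 / 2 : ℝ) ^ n) * ‖π a (u n)‖ ^ 2 + (Xn n (star a * a)).re := by
    intro n a
    simp only [Y]
    rw [LinearMap.add_apply, Complex.add_re, LinearMap.smul_apply, smul_eq_mul,
      Complex.re_ofReal_mul, vecFn_re]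
  have hac2 : AbsContC (X + vecFn π η) G := by
    refine absCont_intro hG Y (fun n => c n + ∑ i ∈ Finset.range n, x i * (σ i)⁻¹) hYp
      (fun n => add_nonneg (hc0 n)
        (Finset.sum_nonneg fun i _ => mul_nonneg (hx0 i) (inv_nonneg.2 (hσ0 i).le)))
      (fun n a => ?_) (fun n a => ?_) fun a => ?_
    · rw [hYre, hYre, hXns]
      have h1 : (‖π a (u n)‖ - ‖π a (ζ n)‖) ^ 2 ≤ ‖π a (u (n + 1))‖ ^ 2 := by
        rw [hζu, map_add]
        refine sq_le_sq.2 ?_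
        rw [abs_of_nonneg (norm_nonneg _)]
        have := abs_norm_sub_norm_le (π a (u n)) (-π a (ζ n))
        rwa [norm_neg, sub_neg_eq_add] at this
      have h2 := y_mono _ _ _ _ (htn n).1 (htn n).2 (norm_nonneg (π a (u n)))
        (norm_nonneg (π a (ζ n))) h1
      have h3 : x n = 2 / (1 / 2 : ℝ) ^ n := by
        simp only [x]
        rw [one_div, inv_pow, div_inv_eq_mul]
      have h4 : (1 / 2 : ℝ) ^ (n + 1) = (1 / 2 : ℝ) ^ n / 2 := by rw [pow_succ]; ring
      rw [h3, h4]
      linarith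
    · rw [hYre, add_mul]
      refine add_le_add ?_ (hXnG n a)
      refine le_trans ?_ (hc n a)
      exact mul_le_of_le_one_left (sq_nonneg _) (by linarith [(htn n).1])
    · have h1 : Tendsto (fun n => ((1 - (1 / 2 : ℝ) ^ n : ℝ) : ℂ)) atTop (𝓝 ((1 - 0 : ℝ) : ℂ)) :=
        (Complex.continuous_ofReal.tendsto _).comp
          (tendsto_const_nhds.sub (tendsto_pow_atTop_nhds_zero_of_lt_one (by norm_num)
            (by norm_num)))
      have h2 : Tendsto u atTop (𝓝 η) := by
        rw [tendsto_iff_norm_sub_tendsto_zero]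
        have h3 : Tendsto (fun n : ℕ => M * (1 / 2 : ℝ) ^ n) atTop (𝓝 (M * 0)) :=
          (tendsto_pow_atTop_nhds_zero_of_lt_one (by norm_num) (by norm_num)).const_mul M
        rw [mul_zero] at h3
        exact squeeze_zero (fun n => norm_nonneg _) huη h3
      have h3 : Tendsto (fun n => vecFn π (u n) a) atTop (𝓝 (vecFn π η a)) := by
        have : Continuous fun v : H => (inner ℂ v (π a v) : ℂ) := by fun_prop
        exact (this.tendsto η).comp h2
      have h4 := (h1.mul h3).add (hXnt a)
      have h5 : (X + vecFn π η) a = ((1 - 0 : ℝ) : ℂ) * vecFn π η a + X a := by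
        rw [LinearMap.add_apply]; simp [add_comm]
      rw [h5]
      exact h4
  have hsingη : SingularC (vecFn π η) G := step_two_singular j π hg hs hηs hsing hnd hG hGg
  have h0p : IsPosFnC (0 : A →ₗ[ℂ] ℂ) := fun a => by simp
  have hsing0 : SingularC (0 : A →ₗ[ℂ] ℂ) G := by
    intro p hp h1 _
    rw [fnle_iff hp h0p] at h1
    refine fnext fun a => ?_
    have h2 := hp.re_nonneg a
    have h3 := h1 a
    rw [hp.eq_re]
    simp at h3 ⊢
    exact le_antisymm h3 h2
  have huniq := hU (X + vecFn π η) G (hX.add (vecFn_pos π η)) hG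
    (X + vecFn π η) 0 X (vecFn π η)
    ⟨hX.add (vecFn_pos π η), h0p, by simp, hac2, hsing0⟩
    ⟨hX, vecFn_pos π η, rfl, hac1, hsingη⟩
  have hz : ∀ a, π a η = 0 := fun a => by
    have := vecFn_re π η a
    rw [← huniq.2] at this
    simpa using this.symm
  by_contra hne
  obtain ⟨e, he⟩ := hnd ‖η‖ (norm_pos_iff.2 hne)
  rw [hz, sub_zero] at he
  exact lt_irrefl _ he

end StepTwo

section Final

theorem unique_of_embedding {A B : Type} [NonUnitalCStarAlgebra A] [NonUnitalCStarAlgebra B]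
    (j : B →⋆ₙₐ[ℂ] A) (hj : Function.Injective j) (hU : LebDecompUniqueC A) :
    LebDecompUniqueC B := by
  intro f g hf hg
  have hfg := hf.add hg
  obtain ⟨K, _, _, _, π, ι, hK⟩ := exists_gns hfg
  obtain ⟨F, hF, hFj⟩ := exists_pos_extension j hj hfg
  obtain ⟨H, _, _, _, ρ, κ, hH⟩ := exists_gns hF
  let jl : B →ₗ[ℂ] A := { toFun := j, map_add' := map_add j, map_smul' := map_smul j }
  have hnorm : ∀ b, ‖(κ ∘ₗ jl) b‖ = ‖ι b‖ := by
    intro b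
    refine (sq_eq_sq₀ (norm_nonneg _) (norm_nonneg _)).1 ?_
    rw [hK.norm_sq, ← hFj, map_mul, map_star]
    exact hH.norm_sq (j b)
  let V : K →L[ℂ] H := LinearMap.extendOfNorm (κ ∘ₗ jl) ι
  have hV : ∀ b, V (ι b) = κ (j b) := LinearMap.extendOfNorm_eq hK.dense
    ⟨1, fun b => by rw [one_mul]; exact (hnorm b).le⟩
  have hVn : ∀ v, ‖V v‖ = ‖v‖ := by
    intro v
    refine hK.dense.induction_on v (isClosed_eq (by fun_prop) (by fun_prop)) fun b => ?_
    rw [hV]; exact hnorm b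
  have hVπ : ∀ b v, V (π b v) = ρ (j b) (V v) := by
    intro b v
    refine hK.dense.induction_on v (isClosed_eq (by fun_prop) (by fun_prop)) fun c => ?_
    rw [hK.act, hV, hV, hH.act, map_mul]
  obtain ⟨θ, hθ⟩ := step_one hf hg hK
  have key : ∀ r s, IsLebDecompC f g r s → ∀ b c, s (star c * b) = inner ℂ (ι c) (π b θ) := by
    intro r s hrs
    obtain ⟨ηn, η, h1, h2, h3, h4⟩ := hθ r s hrs
    refine h4 ?_
    have h5 : V η = 0 := by
      refine step_two (ηn := fun n => V (ηn n)) (g := g) (s := s) j ρ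
        ((V.continuous.tendsto _).comp h1) hg hrs.2.1
        ?_ ?_ hrs.2.2.2.2 ?_ hU
      · intro n
        obtain ⟨β, hβ0, hβ⟩ := h2 n
        refine ⟨β, hβ0, fun b => ?_⟩
        rw [← hVπ, hVn]; exact hβ b
      · intro b
        rw [← hVπ, hVn]; exact h3 b
      · intro ε hε
        obtain ⟨e, he⟩ := hK.nondeg hfg η hε
        refine ⟨e, ?_⟩
        rw [← hVπ, ← map_sub, hVn]; exact he
    have h6 := hVn η
    rw [h5, norm_zero] at h6
    exact norm_eq_zero.1 h6.symm
  intro r s r' s' h h'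
  have hss : s = s' := fnext fun a => by rw [key r s h, key r' s' h']
  refine ⟨?_, hss⟩
  have h1 := h.2.2.1
  have h2 := h'.2.2.1
  rw [h1, hss] at h2
  exact add_right_cancel h2

end Final

/-- **Proposition 2.16**: the Lebesgue decomposition of positive functionals over a
C⋆-algebra `A` is unique if and only if it is unique over every closed `⋆`-subalgebra
of `A`. -/
theorem cstar_lebesgue_unique_iff_forall_closed_subalgebra
    (A : Type) [NonUnitalCStarAlgebra A] :
    LebDecompUniqueC A ↔
      ∀ (B : NonUnitalStarSubalgebra ℂ A) [IsClosed (B : Set A)],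
        LebDecompUniqueC ↥B := by
  constructor
  · intro hU B _
    exact unique_of_embedding (NonUnitalStarSubalgebraClass.subtype B) Subtype.val_injective hU
  · intro h
    have hc : IsClosed ((⊤ : NonUnitalStarSubalgebra ℂ A) : Set A) := by
      rw [NonUnitalStarAlgebra.coe_top]; exact isClosed_univ
    have hT := @h ⊤ hc
    let i : A →⋆ₙₐ[ℂ] (⊤ : NonUnitalStarSubalgebra ℂ A) :=
      { toFun := fun a => ⟨a, NonUnitalStarAlgebra.mem_top⟩
        map_smul' := fun _ _ => rfl
        map_zero' := rfl
        map_add' := fun _ _ => rfl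
        map_mul' := fun _ _ => rfl
        map_star' := fun _ => rfl }
    exact unique_of_embedding i (fun x y hxy => congrArg Subtype.val hxy) hT
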